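/- Let H be a complex Hilbert space and let M, P, Q ⊆ B(H) be subsets satisfying Q = P′ ∩ M, P = Q′ ∩ M, and M = (P ∪ Q)″. Then P ∩ P′ = Q ∩ Q′ = M ∩ M′ = P ∩ Q; that is, the centers of P, of Q, and of M all coincide and are equal to P ∩ Q. (This is the algebraic core of the statement that for a conformal net, an inclusion of interval algebras A(J) ⊆ A(I), with A(J) and its complement algebra A(Jᶜ) each other's relative commutants and generating A(I), induces an identification of the centers Z(A(J)) = Z(A(I)).) -/

import Mathlib

/-! Since `P` and `Q` lie in `M`, an element of `P` commuting with `P` lies in `P′ ∩ M = Q`, and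
symmetrically for `Q`. For `M`, the triple commutant identity gives
`M′ = (P ∪ Q)‴ = (P ∪ Q)′ = P′ ∩ Q′`, so `M ∩ M′ = (Q′ ∩ M) ∩ (P′ ∩ M) = P ∩ Q`. -/


/-- if `M, P, Q ⊆ B(H)` satisfy `Q = P′ ∩ M`, `P = Q′ ∩ M`, and
`M = (P ∪ Q)″`, then the centers of `P`, `Q`, and `M` all coincide with `P ∩ Q`. -/
theorem centers_coincide {H : Type*} [NormedAddCommGroup H] [InnerProductSpace ℂ H]
    [CompleteSpace H] (M P Q : Set (H →L[ℂ] H))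
    (hQ : Q = Set.centralizer P ∩ M)
    (hP : P = Set.centralizer Q ∩ M)
    (hM : M = Set.centralizer (Set.centralizer (P ∪ Q))) :
    P ∩ Set.centralizer P = P ∩ Q ∧
    Q ∩ Set.centralizer Q = P ∩ Q ∧
    M ∩ Set.centralizer M = P ∩ Q := by
  have hMc : Set.centralizer M = Set.centralizer P ∩ Set.centralizer Q := by
    rw [hM, Set.centralizer_centralizer_centralizer, Set.centralizer_union]
  have hxP : ∀ x, x ∈ P ↔ x ∈ Set.centralizer Q ∧ x ∈ M := fun x => Set.ext_iff.mp hP x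
  have hxQ : ∀ x, x ∈ Q ↔ x ∈ Set.centralizer P ∧ x ∈ M := fun x => Set.ext_iff.mp hQ x
  refine ⟨?_, ?_, ?_⟩
  · ext x
    have h1 := hxP x
    have h2 := hxQ x
    simp only [Set.mem_inter_iff]
    tauto
  · ext x
    have h1 := hxP x
    have h2 := hxQ x
    simp only [Set.mem_inter_iff]
    tauto
  · ext x
    have h1 := hxP x
    have h2 := hxQ x
    simp only [hMc, Set.mem_inter_iff]
    tauto
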